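/- Let x be a letter of an alphabet, let n ≥ 2, and let S be the sequence consisting of x repeated n times. Let K = Δ(P_S) be the order complex of the poset P_S of proper substrings of S (the substrings x, xx, …, x^{n-1} ordered by the substring relation, so K is an (n−2)-simplex with all its faces). Assign weight w(x) = a with a a nonzero integer, extend to substrings multiplicatively (so w(x^k) = a^k), and extend to simplices of K by taking the LCM of the weights of their vertices (Type 3 weighted ordered complex, over R = ℤ). Then H_0(K, w) ≅ ℤ and H_i(K, w) ≅ 0 for all i ≥ 1. -/

import Mathlib

/-! The weighted complex of `x^n` is a cone: its apex, the one-letter word `x`, is the least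
vertex, and adding it to a simplex does not change the weight, because `a` divides every `a^k`
with `k ≥ 1`. The argument works for every such weighted cone (`FinSC.IsWCone`) over a domain.

Let `h` send a simplex `σ` to `v * σ` if the apex `v` is not in `σ`, and to `0` otherwise. As
`w (v * σ) = w σ`, the face opposite to `v` always occurs in the boundary with coefficient `1`,
and the usual computation gives `∂ h + h ∂ = id` in positive degrees (`FinSC.homotopy`), so every
cycle there is a boundary.

In degree `0`, the augmentation `u ↦ w u / w v` is surjective, since `v ↦ 1`. It kills
boundaries, and the edge `{v, u}` shows that `u` is homologous to `(w u / w v) v`; hence its kernel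
is exactly the group of boundaries (`FinSC.ker_aug`) and `H_0 ≅ R`. -/

/-! # Prelude: weighted simplicial complexes and discrete Morse theory -/

/-- A finite abstract simplicial complex on a vertex type `V`:
a finite set of nonempty finite vertex sets, closed under nonempty subsets. -/
structure FinSC (V : Type*) where
  faces : Finset (Finset V)
  not_empty_mem : ∅ ∉ faces
  down_closed : ∀ σ ∈ faces, ∀ τ ⊆ σ, τ.Nonempty → τ ∈ faces

namespace FinSC

variable {V : Type*} [LinearOrder V] {R : Type*} [CommRing R] [IsDomain R]

/-- `(K, w)` is a weighted simplicial complex: weights of faces divide weights of cofaces. -/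
def IsWeight (K : FinSC V) (w : Finset V → R) : Prop :=
  ∀ σ ∈ K.faces, ∀ τ ∈ K.faces, σ ⊆ τ → w σ ∣ w τ

open scoped Classical in
/-- The quotient `a / b` in an integral domain, defined (via choice) when `b ∣ a`, else `0`. -/
noncomputable def divR {R : Type*} [CommRing R] (a b : R) : R :=
  if h : b ∣ a then h.choose else 0

/-- `dFace σ i` deletes the `i`-th vertex (in the linear order) from the simplex `σ`. -/
def dFace (σ : Finset V) (i : ℕ) : Finset V :=
  match (σ.sort (· ≤ ·))[i]? with
  | some v => σ.erase v
  | none => σ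

/-- The basis of the weighted chain group in degree `n`:
`n`-simplices (i.e. of cardinality `n+1`) of `K` with nonzero weight. -/
abbrev ChainIdx (K : FinSC V) (w : Finset V → R) (n : ℕ) :=
  {σ : Finset V // σ ∈ K.faces ∧ σ.card = n + 1 ∧ w σ ≠ 0}

/-- The weighted chain group `C_n(K, w)`: the free `R`-module on the `n`-simplices
of `K` with nonzero weight. -/
abbrev WChain (K : FinSC V) (w : Finset V → R) (n : ℕ) :=
  ChainIdx K w n →₀ R

open scoped Classical in
/-- The weighted boundary `∂^w σ = Σ_i (-1)^i (w σ / w (d_i σ)) d_i σ` of a single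
`(n+1)`-simplex `σ`, as an element of `C_n(K, w)`. -/
noncomputable def bdElem (K : FinSC V) (w : Finset V → R) (n : ℕ) (σ : Finset V) :
    WChain K w n :=
  ∑ i ∈ Finset.range (n + 2),
    if h : dFace σ i ∈ K.faces ∧ (dFace σ i).card = n + 1 ∧ w (dFace σ i) ≠ 0 then
      Finsupp.single (⟨dFace σ i, h⟩ : ChainIdx K w n)
        ((-1 : R) ^ i * divR (w σ) (w (dFace σ i)))
    else 0

/-- The weighted boundary map `∂^w_{n+1} : C_{n+1}(K,w) → C_n(K,w)`. -/
noncomputable def wBoundary (K : FinSC V) (w : Finset V → R) (n : ℕ) :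
    WChain K w (n + 1) →ₗ[R] WChain K w n :=
  Finsupp.linearCombination R (fun σ : ChainIdx K w (n + 1) => bdElem K w n σ.1)

/-- The submodule of weighted `n`-cycles (`ker ∂^w_n`; everything in degree `0`). -/
noncomputable def cycles (K : FinSC V) (w : Finset V → R) :
    (n : ℕ) → Submodule R (WChain K w n)
  | 0 => ⊤
  | n + 1 => LinearMap.ker (wBoundary K w n)

/-- The submodule of weighted `n`-boundaries (`im ∂^w_{n+1}`). -/
noncomputable def bdries (K : FinSC V) (w : Finset V → R) (n : ℕ) :
    Submodule R (WChain K w n) :=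
  LinearMap.range (wBoundary K w n)

/-- The `n`-th weighted homology `H_n(K,w) = ker ∂^w_n / im ∂^w_{n+1}`, realized as the
image of the cycles in `C_n(K,w) ⧸ im ∂^w_{n+1}` (since `im ∂^w_{n+1} ⊆ ker ∂^w_n`,
this is exactly `ker ∂^w_n / im ∂^w_{n+1}`). -/
noncomputable def wHomologyS (K : FinSC V) (w : Finset V → R) (n : ℕ) :
    Submodule R (WChain K w n ⧸ bdries K w n) :=
  Submodule.map (bdries K w n).mkQ (cycles K w n)

/-- The `n`-th weighted homology as a type (an `R`-module). -/
abbrev wHomology (K : FinSC V) (w : Finset V → R) (n : ℕ) :=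
  ↥(wHomologyS K w n)

/-- The homology class of a weighted cycle. -/
noncomputable def classOf (K : FinSC V) (w : Finset V → R) (n : ℕ)
    (z : WChain K w n) (hz : z ∈ cycles K w n) : wHomology K w n :=
  ⟨(bdries K w n).mkQ z, Submodule.mem_map_of_mem hz⟩

/-- `σ` is a free face of `τ` in `K`: `σ` is a proper face of `τ` and of no other simplex. -/
def IsFreeFace (K : FinSC V) (σ τ : Finset V) : Prop :=
  σ ∈ K.faces ∧ τ ∈ K.faces ∧ σ ⊂ τ ∧ ∀ ρ ∈ K.faces, σ ⊂ ρ → ρ = τ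

/-- An elementary collapse: removal of a free face pair. -/
def ElemCollapse (K L : FinSC V) : Prop :=
  ∃ σ τ : Finset V, IsFreeFace K σ τ ∧ L.faces = K.faces \ {σ, τ}

/-- `K ↘ L`: `K` collapses onto `L` by a finite sequence of elementary collapses. -/
def Collapses (K L : FinSC V) : Prop :=
  Relation.ReflTransGen ElemCollapse K L

/-- `σ` is a maximal face of `K`: it is a proper face of no simplex of `K`. -/
def IsMaximalFace (K : FinSC V) (σ : Finset V) : Prop :=
  σ ∈ K.faces ∧ ∀ τ ∈ K.faces, ¬ σ ⊂ τ

/-- `f : K → ℝ` is a discrete Morse function: each simplex has at most one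
codimension-one coface with no bigger `f`-value, and at most one codimension-one
face with no smaller `f`-value. -/
def IsDiscreteMorse (K : FinSC V) (f : Finset V → ℝ) : Prop :=
  ∀ α ∈ K.faces,
    {β : Finset V | β ∈ K.faces ∧ α ⊂ β ∧ β.card = α.card + 1 ∧ f β ≤ f α}.Subsingleton ∧
    {γ : Finset V | γ ∈ K.faces ∧ γ ⊂ α ∧ γ.card + 1 = α.card ∧ f α ≤ f γ}.Subsingleton

/-- `α` is a critical simplex of the discrete Morse function `f`. -/
def IsCritical (K : FinSC V) (f : Finset V → ℝ) (α : Finset V) : Prop :=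
  (∀ β ∈ K.faces, α ⊂ β → β.card = α.card + 1 → ¬ f β ≤ f α) ∧
  (∀ γ ∈ K.faces, γ ⊂ α → γ.card + 1 = α.card → ¬ f α ≤ f γ)

/-- `α` is `w`-simple: `w α ≠ 0`, and any codimension-one face `γ < α` with
`f γ ≥ f α` satisfies `w γ = w α`. -/
def IsWSimple (K : FinSC V) (w : Finset V → R) (f : Finset V → ℝ) (α : Finset V) : Prop :=
  w α ≠ 0 ∧ ∀ γ ∈ K.faces, γ ⊂ α → γ.card + 1 = α.card → f α ≤ f γ → w γ = w α

/-- The level subcomplex `K(c)`: all simplices with `f`-value at most `c`,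
together with all of their faces. -/
noncomputable def levelSub (K : FinSC V) (f : Finset V → ℝ) (c : ℝ) : FinSC V where
  faces := K.faces.filter (fun α => ∃ β ∈ K.faces, α ⊆ β ∧ f β ≤ c)
  not_empty_mem := by simp [Finset.mem_filter, K.not_empty_mem]
  down_closed := by
    intro σ hσ τ hτsub hτne
    simp only [Finset.mem_filter] at hσ ⊢
    obtain ⟨hσK, β, hβ, hσβ, hfβ⟩ := hσ
    exact ⟨K.down_closed σ hσK τ hτsub hτne, β, hβ, hτsub.trans hσβ, hfβ⟩

/-- The chains of `C_n(K,w)` supported on simplices of a subcomplex `L`. -/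
noncomputable def chainsIn (K L : FinSC V) (w : Finset V → R) (n : ℕ) :
    Submodule R (WChain K w n) where
  carrier := {x | ∀ σ : ChainIdx K w n, x σ ≠ 0 → σ.1 ∈ L.faces}
  add_mem' := by
    intro a b ha hb σ h
    by_cases h1 : a σ = 0
    · exact hb σ (by simpa [h1] using h)
    · exact ha σ h1
  zero_mem' := by intro σ h; simp at h
  smul_mem' := by
    intro r x hx σ h
    refine hx σ fun h0 => ?_
    simp [Finsupp.smul_apply, h0] at h

/-- The image of the map `i_* : H_n(L,w) → H_n(K,w)` induced by the inclusion of
chain complexes: the classes in `H_n(K,w)` of cycles of `K` supported on simplices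
of the subcomplex `L`. -/
noncomputable def imInduced (K L : FinSC V) (w : Finset V → R) (n : ℕ) :
    Submodule R (wHomology K w n) :=
  Submodule.comap (wHomologyS K w n).subtype
    (Submodule.map (bdries K w n).mkQ (cycles K w n ⊓ chainsIn K L w n))

end FinSC

section OrderComplex

variable {A : Type*} [LinearOrder A]

/-- The proper (nonempty, not all of `S`) substrings of a sequence `S`,
i.e. its proper nonempty infixes. -/
def properSubstr (S : List A) : Finset (List A) :=
  ((S.tails.flatMap List.inits).toFinset).filter (fun T => T ≠ [] ∧ T ≠ S)

/-- The order complex `Δ(P_S)` of the poset of proper substrings of `S` under the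
substring (infix) partial order: faces are the nonempty chains. -/
def orderComplex (S : List A) : FinSC (List A) where
  faces := (properSubstr S).powerset.filter
    (fun σ => σ.Nonempty ∧ ∀ T₁ ∈ σ, ∀ T₂ ∈ σ, T₁ <:+: T₂ ∨ T₂ <:+: T₁)
  not_empty_mem := by simp
  down_closed := by
    intro σ hσ τ hτsub hτne
    simp only [Finset.mem_filter, Finset.mem_powerset] at hσ ⊢
    exact ⟨hτsub.trans hσ.1, hτne,
      fun T₁ h1 T₂ h2 => hσ.2.2 T₁ (hτsub h1) T₂ (hτsub h2)⟩

end OrderComplex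

namespace FinSC

section Cone

variable {V : Type*} [LinearOrder V] {R : Type*} [CommRing R]

theorem divR_mul_cancel {a b : R} (h : b ∣ a) : b * divR a b = a := by
  unfold divR
  rw [dif_pos h]
  exact h.choose_spec.symm

theorem divR_self [IsDomain R] {a : R} (h : a ≠ 0) : divR a a = 1 :=
  mul_left_cancel₀ h (by rw [divR_mul_cancel dvd_rfl, mul_one])

/-! ### Faces and boundaries -/

theorem dFace_of_lt {σ : Finset V} {i : ℕ} (hi : i < σ.card) :
    ∃ u ∈ σ, dFace σ i = σ.erase u := by
  have h : i < (σ.sort (· ≤ ·)).length := by simpa using hi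
  refine ⟨(σ.sort (· ≤ ·))[i], ?_, ?_⟩
  · exact (Finset.mem_sort _).1 (List.getElem_mem h)
  · simp [dFace, List.getElem?_eq_getElem h]

theorem dFace_insert_zero {v : V} {σ : Finset V} (hv : v ∉ σ) (hm : ∀ u ∈ σ, v ≤ u) :
    dFace (insert v σ) 0 = σ := by
  simp [dFace, Finset.sort_insert _ hm hv, hv]

theorem dFace_insert_succ {v : V} {σ : Finset V} (hv : v ∉ σ) (hm : ∀ u ∈ σ, v ≤ u)
    {i : ℕ} (hi : i < σ.card) :
    dFace (insert v σ) (i + 1) = insert v (dFace σ i) := by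
  have h : i < (σ.sort (· ≤ ·)).length := by simpa using hi
  have hu : (σ.sort (· ≤ ·))[i] ∈ σ := (Finset.mem_sort _).1 (List.getElem_mem h)
  simp only [dFace, Finset.sort_insert _ hm hv, List.getElem?_cons_succ,
    List.getElem?_eq_getElem h]
  exact Finset.erase_insert_of_ne (fun e => hv (e ▸ hu))

open scoped Classical in
/-- The chain `c • τ` of degree `n`, read as `0` when `τ` is not an `n`-simplex of `K` of
nonzero weight. -/
noncomputable def term (K : FinSC V) (w : Finset V → R) (n : ℕ) (τ : Finset V) (c : R) :
    WChain K w n :=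
  if h : τ ∈ K.faces ∧ τ.card = n + 1 ∧ w τ ≠ 0 then
    Finsupp.single (⟨τ, h⟩ : ChainIdx K w n) c
  else 0

theorem term_of_mem {K : FinSC V} {w : Finset V → R} {n : ℕ} {τ : Finset V}
    (h : τ ∈ K.faces ∧ τ.card = n + 1 ∧ w τ ≠ 0) (c : R) :
    term K w n τ c = Finsupp.single (⟨τ, h⟩ : ChainIdx K w n) c := dif_pos h

theorem bdElem_eq (K : FinSC V) (w : Finset V → R) (n : ℕ) (σ : Finset V) :
    bdElem K w n σ = ∑ i ∈ Finset.range (n + 2),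
      term K w n (dFace σ i) ((-1 : R) ^ i * divR (w σ) (w (dFace σ i))) := rfl

theorem term_neg (K : FinSC V) (w : Finset V → R) (n : ℕ) (τ : Finset V) (c : R) :
    term K w n τ (-c) = -term K w n τ c := by
  unfold term
  split_ifs <;> simp

/-! ### The contracting homotopy of a weighted cone -/

/-- `(K, w)` is a weighted cone with apex `v`: coning off with `v` preserves faces and their
weights, and `v` is the least vertex, so that it is always deleted by `d_0`. -/
structure IsWCone (K : FinSC V) (w : Finset V → R) (v : V) : Prop where
  weight : IsWeight K w
  ne_zero : ∀ σ ∈ K.faces, w σ ≠ 0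
  apex : {v} ∈ K.faces
  insert_mem : ∀ σ ∈ K.faces, insert v σ ∈ K.faces
  le : ∀ σ ∈ K.faces, ∀ u ∈ σ, v ≤ u
  weight_insert : ∀ σ ∈ K.faces, w (insert v σ) = w σ

/-- The cone operator `C_n → C_{n+1}`, `σ ↦ v * σ` if `v ∉ σ` and `σ ↦ 0` otherwise. -/
noncomputable def coneMap (K : FinSC V) (w : Finset V → R) (v : V) (n : ℕ) :
    WChain K w n →ₗ[R] WChain K w (n + 1) :=
  Finsupp.linearCombination R (fun σ : ChainIdx K w n =>
    if v ∈ σ.1 then 0 else term K w (n + 1) (insert v σ.1) 1)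

theorem coneMap_term (K : FinSC V) (w : Finset V → R) (v : V) (n : ℕ) {τ : Finset V}
    (h : τ ∈ K.faces ∧ τ.card = n + 1 ∧ w τ ≠ 0) (c : R) :
    coneMap K w v n (term K w n τ c) =
      if v ∈ τ then 0 else term K w (n + 1) (insert v τ) c := by
  rw [term_of_mem h, coneMap, Finsupp.linearCombination_single]
  split_ifs
  · simp
  · unfold term
    split_ifs <;> simp

variable {K : FinSC V} {w : Finset V → R} {v : V}

theorem dFace_mem {σ : Finset V} {n i : ℕ} (hw : ∀ σ ∈ K.faces, w σ ≠ 0) (hσ : σ ∈ K.faces)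
    (hc : σ.card = n + 2) (hi : i < n + 2) :
    dFace σ i ∈ K.faces ∧ (dFace σ i).card = n + 1 ∧ w (dFace σ i) ≠ 0 := by
  obtain ⟨u, hu, e⟩ := dFace_of_lt (hc ▸ hi)
  have hcard : (dFace σ i).card = n + 1 := by
    rw [e, Finset.card_erase_of_mem hu, hc]; rfl
  have hmem : dFace σ i ∈ K.faces :=
    K.down_closed σ hσ _ (e ▸ Finset.erase_subset _ _) (Finset.card_pos.1 (by omega))
  exact ⟨hmem, hcard, hw _ hmem⟩

/-- The boundary of the cone over `σ` is `σ` minus the cone over the boundary of `σ`. -/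
theorem bdElem_insert [IsDomain R] (H : IsWCone K w v) {σ : Finset V} {n : ℕ} (hσ : σ ∈ K.faces)
    (hc : σ.card = n + 2) (hv : v ∉ σ) :
    bdElem K w (n + 1) (insert v σ) = term K w (n + 1) σ 1 -
      ∑ i ∈ Finset.range (n + 2), term K w (n + 1) (insert v (dFace σ i))
        ((-1 : R) ^ i * divR (w σ) (w (dFace σ i))) := by
  have hm := H.le σ hσ
  rw [bdElem_eq, Finset.sum_range_succ', dFace_insert_zero hv hm, H.weight_insert σ hσ,
    divR_self (H.ne_zero σ hσ), pow_zero, one_mul, sub_eq_add_neg,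
    ← Finset.sum_neg_distrib]
  refine (add_comm _ _).trans (congrArg₂ (· + ·) rfl (Finset.sum_congr rfl fun i hi => ?_))
  have hi' := Finset.mem_range.1 hi
  rw [dFace_insert_succ hv hm (hc ▸ hi'),
    H.weight_insert _ (dFace_mem H.ne_zero hσ hc hi').1, pow_succ, ← term_neg]
  congr 1
  ring

/-- The cone operator is a contracting homotopy in positive degrees. -/
theorem homotopy [IsDomain R] (H : IsWCone K w v) (n : ℕ) (z : WChain K w (n + 1)) :
    wBoundary K w (n + 1) (coneMap K w v (n + 1) z) + coneMap K w v n (wBoundary K w n z) = z := by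
  suffices h : (wBoundary K w (n + 1)) ∘ₗ (coneMap K w v (n + 1)) +
      (coneMap K w v n) ∘ₗ (wBoundary K w n) = LinearMap.id from LinearMap.congr_fun h z
  refine Finsupp.lhom_ext' fun ⟨σ, hσ, hc, hw⟩ => LinearMap.ext_ring ?_
  have e1 : Finsupp.single (⟨σ, hσ, hc, hw⟩ : ChainIdx K w (n + 1)) (1 : R) =
      term K w (n + 1) σ 1 := (term_of_mem ⟨hσ, hc, hw⟩ 1).symm
  have e2 : wBoundary K w n (Finsupp.single ⟨σ, hσ, hc, hw⟩ 1) = bdElem K w n σ := by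
    simp [wBoundary]
  simp only [LinearMap.comp_apply, LinearMap.add_apply, Finsupp.lsingle_apply,
    LinearMap.id_apply, e2]
  rw [e1, coneMap_term K w v (n + 1) ⟨hσ, hc, hw⟩]
  by_cases hv : v ∈ σ
  · rw [if_pos hv, map_zero, zero_add]
    obtain ⟨τ, hvτ, rfl⟩ : ∃ τ, v ∉ τ ∧ insert v τ = σ :=
      ⟨σ.erase v, Finset.notMem_erase _ _, Finset.insert_erase hv⟩
    have hcτ : τ.card = n + 1 := by
      rw [Finset.card_insert_of_notMem hvτ] at hc; omega
    have hτ : τ ∈ K.faces :=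
      K.down_closed _ hσ _ (Finset.subset_insert _ _) (Finset.card_pos.1 (by omega))
    have hm := H.le τ hτ
    rw [bdElem_eq, map_sum, Finset.sum_range_succ', Finset.sum_eq_zero, zero_add]
    · rw [coneMap_term K w v n (dFace_mem H.ne_zero hσ hc (by omega)), dFace_insert_zero hvτ hm,
        if_neg hvτ, H.weight_insert τ hτ, divR_self (H.ne_zero τ hτ)]
      simp
    · intro i hi
      have hi' := Finset.mem_range.1 hi
      rw [coneMap_term K w v n (dFace_mem H.ne_zero hσ hc (by omega)),
        dFace_insert_succ hvτ hm (hcτ ▸ hi'), if_pos (Finset.mem_insert_self _ _)]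
  · have hins : insert v σ ∈ K.faces ∧ (insert v σ).card = n + 1 + 1 + 1 ∧
        w (insert v σ) ≠ 0 :=
      ⟨H.insert_mem σ hσ, by rw [Finset.card_insert_of_notMem hv, hc],
        H.ne_zero _ (H.insert_mem σ hσ)⟩
    have e3 : wBoundary K w (n + 1) (term K w (n + 1 + 1) (insert v σ) 1) =
        bdElem K w (n + 1) (insert v σ) := by
      rw [term_of_mem hins]; simp [wBoundary]
    rw [if_neg hv, e3, bdElem_insert H hσ hc hv, bdElem_eq, map_sum, sub_add, sub_eq_self,
      sub_eq_zero]
    refine Finset.sum_congr rfl fun i hi => ?_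
    have hi' := Finset.mem_range.1 hi
    obtain ⟨u, hu, e⟩ := dFace_of_lt (hc ▸ hi' : i < σ.card)
    rw [coneMap_term K w v n (dFace_mem H.ne_zero hσ hc hi'), if_neg]
    rw [e]
    exact fun hmem => hv (Finset.mem_of_mem_erase hmem)

theorem wHomology_succ_subsingleton [IsDomain R] (H : IsWCone K w v) (n : ℕ) :
    Subsingleton (wHomology K w (n + 1)) := by
  rw [Submodule.subsingleton_iff_eq_bot, wHomologyS, eq_bot_iff,
    Submodule.map_le_iff_le_comap, Submodule.comap_bot, Submodule.ker_mkQ]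
  intro z hz
  have hz' : wBoundary K w n z = 0 := hz
  have := homotopy H n z
  rw [hz', map_zero, add_zero] at this
  exact ⟨_, this⟩

/-! ### Degree zero -/

/-- The augmentation `C_0 → R`, `u ↦ w(u) / w(v)`. -/
noncomputable def aug (K : FinSC V) (w : Finset V → R) (v : V) : WChain K w 0 →ₗ[R] R :=
  Finsupp.linearCombination R (fun σ : ChainIdx K w 0 => divR (w σ.1) (w {v}))

theorem apex_dvd (H : IsWCone K w v) {σ : Finset V} (hσ : σ ∈ K.faces) : w {v} ∣ w σ := by
  rw [← H.weight_insert σ hσ]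
  exact H.weight _ H.apex _ (H.insert_mem σ hσ) (by simp)

/-- The augmentation kills boundaries: both endpoints of an edge `σ` contribute
`w(σ) / w(v)`, with opposite signs. -/
theorem aug_bdElem [IsDomain R] (H : IsWCone K w v) {σ : Finset V} (hσ : σ ∈ K.faces) (hc : σ.card = 2) :
    aug K w v (bdElem K w 0 σ) = 0 := by
  have key : ∀ i < 2, ∀ c : R,
      w {v} * aug K w v (term K w 0 (dFace σ i) (c * divR (w σ) (w (dFace σ i)))) = c * w σ := by
    intro i hi c
    have h := dFace_mem H.ne_zero hσ hc hi
    obtain ⟨u, -, e⟩ := dFace_of_lt (hc ▸ hi : i < σ.card)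
    rw [term_of_mem h, aug, Finsupp.linearCombination_single, smul_eq_mul]
    calc _ = c * ((w {v} * divR (w (dFace σ i)) (w {v})) * divR (w σ) (w (dFace σ i))) := by ring
      _ = _ := by
        rw [divR_mul_cancel (apex_dvd H h.1), divR_mul_cancel]
        exact H.weight _ h.1 _ hσ (e ▸ Finset.erase_subset _ _)
  refine mul_left_cancel₀ (H.ne_zero _ H.apex) ?_
  rw [bdElem_eq, map_sum, Finset.sum_range_succ, Finset.sum_range_one, mul_add,
    key 0 (by omega), key 1 (by omega)]
  ring

/-- Modulo boundaries, every vertex `u` is a multiple of the apex, as the edge `{v, u}` shows. -/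
theorem vertex_sub_mem [IsDomain R] (H : IsWCone K w v) {σ : Finset V} (hσ : σ ∈ K.faces) (hc : σ.card = 1) :
    term K w 0 σ 1 - term K w 0 {v} (divR (w σ) (w {v})) ∈ bdries K w 0 := by
  obtain ⟨u, rfl⟩ := Finset.card_eq_one.1 hc
  by_cases huv : v = u
  · subst huv
    rw [divR_self (H.ne_zero _ hσ), sub_self]
    exact zero_mem _
  · have hv : v ∉ ({u} : Finset V) := by simpa using huv
    have hm := H.le _ hσ
    have hins := H.insert_mem _ hσ
    refine ⟨Finsupp.single ⟨insert v {u}, hins, by rw [Finset.card_insert_of_notMem hv, hc],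
      H.ne_zero _ hins⟩ 1, ?_⟩
    have hd : dFace ({u} : Finset V) 0 = ∅ := by simp [dFace]
    rw [wBoundary, Finsupp.linearCombination_single, one_smul, bdElem_eq, Finset.sum_range_succ,
      Finset.sum_range_one, dFace_insert_zero hv hm, dFace_insert_succ hv hm (by simp), hd,
      H.weight_insert _ hσ, divR_self (H.ne_zero _ hσ)]
    simp [term_neg, sub_eq_add_neg]

theorem ker_aug [IsDomain R] (H : IsWCone K w v) : LinearMap.ker (aug K w v) = bdries K w 0 := by
  apply le_antisymm
  · intro z hz
    have hva : ({v} : Finset V) ∈ K.faces ∧ ({v} : Finset V).card = 0 + 1 ∧ w {v} ≠ 0 :=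
      ⟨H.apex, by simp, H.ne_zero _ H.apex⟩
    have key : ∀ y : WChain K w 0, y - Finsupp.single ⟨{v}, hva⟩ (aug K w v y) ∈ bdries K w 0 := by
      intro y
      induction y using Finsupp.induction_linear with
      | zero => simp
      | add f g hf hg =>
        rw [map_add, Finsupp.single_add, add_sub_add_comm]
        exact add_mem hf hg
      | single σ c =>
        have := (bdries K w 0).smul_mem c (vertex_sub_mem H σ.2.1 σ.2.2.1)
        rw [term_of_mem σ.2, term_of_mem hva] at this
        simpa [aug, smul_sub] using this
    have := key z
    rwa [LinearMap.mem_ker.1 hz, Finsupp.single_zero, sub_zero] at this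
  · rintro _ ⟨y, rfl⟩
    rw [LinearMap.mem_ker]
    induction y using Finsupp.induction_linear with
    | zero => simp
    | add f g hf hg => rw [map_add, map_add, hf, hg, add_zero]
    | single σ c =>
      rw [wBoundary, Finsupp.linearCombination_single, map_smul, aug_bdElem H σ.2.1 σ.2.2.1,
        smul_zero]

theorem aug_surjective [IsDomain R] (H : IsWCone K w v) : Function.Surjective (aug K w v) := by
  intro r
  refine ⟨Finsupp.single ⟨{v}, H.apex, by simp, H.ne_zero _ H.apex⟩ r, ?_⟩
  simp [aug, divR_self (H.ne_zero _ H.apex)]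

theorem wHomology_zero_equiv [IsDomain R] (H : IsWCone K w v) : Nonempty (wHomology K w 0 ≃ₗ[R] R) := by
  have htop : wHomologyS K w 0 = ⊤ := by
    rw [wHomologyS, cycles, Submodule.map_top, Submodule.range_mkQ]
  exact ⟨(LinearEquiv.ofTop _ htop).trans <| (Submodule.quotEquivOfEq _ _ (ker_aug H).symm).trans <|
    (aug K w v).quotKerEquivOfSurjective (aug_surjective H)⟩

end Cone

end FinSC

/-! ### The order complex of `x^n` -/

section Replicate

variable {A : Type*} [LinearOrder A]

theorem mem_properSubstr_replicate {x : A} {n : ℕ} {T : List A} :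
    T ∈ properSubstr (List.replicate n x) ↔ ∃ k, 1 ≤ k ∧ k < n ∧ T = List.replicate k x := by
  simp only [properSubstr, Finset.mem_filter, List.mem_toFinset, List.mem_flatMap,
    List.mem_tails, List.mem_inits]
  constructor
  · rintro ⟨⟨U, hU, hT⟩, h0, h1⟩
    obtain ⟨k, hk, rfl⟩ := List.sublist_replicate_iff.1 (hT.sublist.trans hU.sublist)
    refine ⟨k, ?_, ?_, rfl⟩
    · rcases k with _ | k
      · simp at h0
      · omega
    · exact lt_of_le_of_ne hk fun e => h1 (by rw [e])
  · rintro ⟨k, h1, h2, rfl⟩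
    refine ⟨⟨List.replicate n x, List.suffix_rfl, ?_⟩, ?_, ?_⟩
    · exact ⟨List.replicate (n - k) x, by rw [List.replicate_append_replicate]; congr 1; omega⟩
    · intro e
      have := congrArg List.length e
      simp at this
      omega
    · intro e
      have := congrArg List.length e
      simp at this
      omega

/-- Any nonempty set of proper substrings of `x^n` is a chain, so the complex is a full simplex. -/
theorem mem_faces_replicate {x : A} {n : ℕ} {σ : Finset (List A)} :
    σ ∈ (orderComplex (List.replicate n x)).faces ↔
      σ.Nonempty ∧ ∀ T ∈ σ, ∃ k, 1 ≤ k ∧ k < n ∧ T = List.replicate k x := by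
  simp only [orderComplex, Finset.mem_filter, Finset.mem_powerset]
  constructor
  · rintro ⟨h, h0, -⟩
    exact ⟨h0, fun T hT => mem_properSubstr_replicate.1 (h hT)⟩
  · rintro ⟨h0, h⟩
    refine ⟨fun T hT => mem_properSubstr_replicate.2 (h T hT), h0, fun T₁ h₁ T₂ h₂ => ?_⟩
    obtain ⟨k, -, -, rfl⟩ := h T₁ h₁
    obtain ⟨l, -, -, rfl⟩ := h T₂ h₂
    have aux : ∀ {k l : ℕ}, k ≤ l → List.replicate k x <:+: List.replicate l x := by
      intro k l hkl
      refine List.IsPrefix.isInfix ⟨List.replicate (l - k) x, ?_⟩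
      rw [List.replicate_append_replicate]; congr 1; omega
    exact (le_total k l).imp aux aux

theorem singleton_le_replicate (x : A) {k : ℕ} (hk : 1 ≤ k) : [x] ≤ List.replicate k x := by
  obtain ⟨k, rfl⟩ := Nat.exists_eq_add_of_le' hk
  rw [List.replicate_succ]
  rcases k with _ | k
  · simp
  · rw [List.replicate_succ]
    apply le_of_lt
    simp

/-- The order complex of `x^n` is a weighted cone with apex the one-letter word `x`: its weight
`a` divides the weight `a^k` of every other vertex, so it does not change least common
multiples. -/
theorem isWCone_replicate (x : A) {n : ℕ} (hn : 2 ≤ n) {a : ℤ} (ha : a ≠ 0) :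
    FinSC.IsWCone (orderComplex (List.replicate n x))
      (fun σ => σ.lcm (fun T => (T.map (fun _ => a)).prod)) [x] where
  weight σ _ τ _ h := Finset.lcm_mono h
  ne_zero σ hσ := by
    rw [Ne, Finset.lcm_eq_zero_iff]
    rintro ⟨T, -, hT⟩
    simp [ha] at hT
  apex := mem_faces_replicate.2 ⟨by simp, fun T hT => ⟨1, le_rfl, by omega, by simpa using hT⟩⟩
  -- `insert` here uses the equality test of the linear order, not that of `List`.
  insert_mem σ hσ := by
    rw [mem_faces_replicate] at hσ ⊢
    refine ⟨by simp, fun T hT => ?_⟩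
    rcases (@Finset.mem_insert _ LinearOrder.toDecidableEq _ _ _).1 hT with rfl | hT
    · exact ⟨1, le_rfl, by omega, rfl⟩
    · exact hσ.2 T hT
  le σ hσ u hu := by
    obtain ⟨k, hk, -, rfl⟩ := (mem_faces_replicate.1 hσ).2 u hu
    exact singleton_le_replicate x hk
  weight_insert σ hσ := by
    obtain ⟨⟨T, hT⟩, h⟩ := mem_faces_replicate.1 hσ
    obtain ⟨k, hk, -, rfl⟩ := h T hT
    have hdvd : a ∣ σ.lcm (fun T => (T.map (fun _ => a)).prod) := by
      refine dvd_trans ?_ (Finset.dvd_lcm hT)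
      simpa using dvd_pow_self a (by omega)
    refine (@Finset.lcm_insert _ _ _ _ _ _ LinearOrder.toDecidableEq _).trans ?_
    simp only [List.map_cons, List.map_nil, List.prod_cons, List.prod_nil, mul_one]
    rw [lcm_eq_right_iff _ _ Finset.normalize_lcm]
    exact hdvd

end Replicate

open FinSC in
/-- Proposition on the sequence `x^n`.  Let `x` be a letter, `n ≥ 2`,
and `S = x^n`.  Let `K = Δ(P_S)` be the order complex of the poset of proper substrings
of `S` (an `(n-2)`-simplex with all its faces), with the Type 3 weighting over `ℤ`:
`w (x^k) = a^k` for a nonzero integer `a`, and the weight of a simplex is the LCM of the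
weights of its vertices.  Then `H_0(K,w) ≅ ℤ` and `H_i(K,w) ≅ 0` for `i ≥ 1`. -/
theorem wHomology_orderComplex_replicate
    {A : Type*} [LinearOrder A] (x : A) (n : ℕ) (hn : 2 ≤ n)
    (a : ℤ) (ha : a ≠ 0) :
    Nonempty (wHomology (orderComplex (List.replicate n x))
        (fun σ => σ.lcm (fun T => (T.map (fun _ => a)).prod)) 0 ≃ₗ[ℤ] ℤ) ∧
    ∀ i : ℕ, 1 ≤ i → Subsingleton (wHomology (orderComplex (List.replicate n x))
        (fun σ => σ.lcm (fun T => (T.map (fun _ => a)).prod)) i) := by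
  have H := isWCone_replicate x hn ha
  refine ⟨wHomology_zero_equiv H, fun i hi => ?_⟩
  obtain ⟨i, rfl⟩ := Nat.exists_eq_add_of_le' hi
  exact wHomology_succ_subsingleton H i
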